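/- Let D be a division ring and N a normal subgroup of D^* that is radical over a proper division subring K of D containing the center. Then every torsion element of N lies in K. -/

import Mathlib

/-!
Suppose `a ∈ N` is torsion and `a ∉ K`. Comparing the conjugates of `y ∈ N` by `d` and by `d + 1`
shows that for all `y ∈ N` and `d : D` some power of `y` commutes with `d`
(`exists_pow_commute_of_radical`). So it suffices to find, from the noncentral torsion element
`a`, an element of `N` violating this.

The order of `a` is prime to the characteristic, so averaging gives `x ≠ 0` with
`x * a = a ^ i * x` and `a ^ i ≠ a` (`exists_twist`). Let `E` be the division ring generated by `a`
and `x`. Some power `x ^ r` is central in `E`, so `a` and `x` generate a finite-dimensional algebra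
over the center of `E`. For a natural number `t` the commutator
`w = a (1 + x t) a⁻¹ (1 + x t)⁻¹ = (1 + ζ x t) (1 + x t)⁻¹`, with `ζ = a ^ (1 - i) ≠ 1`, lies
in `N`, so some power of it is central in `E`. As `w` has norm `1`, it is torsion
(`commutator_torsion`), and its order is prime to the characteristic.

Clearing denominators in `w ^ M = 1` with the central element `1 - (-x t) ^ r` and expanding to
first order in `x` gives `M (ζ - 1) x ≡ 0` modulo `x²` (`exists_first_order`). This is used twice.

* For `t = 1` it shows that `x⁻¹` is a polynomial in `a` and `x` over the prime field
  (`TwistedPair.inv_mem_adjoin`), so `a` and `x⁻¹` generate a finite-dimensional algebra over the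
  prime field (`finite_adjoin_inv`). In characteristic `p` that algebra is a finite domain, hence
  commutative, contradicting `a ^ i ≠ a`.
* In characteristic zero, torsion elements of a finite-dimensional rational division algebra have
  bounded order (`orderOf_dvd_factorial`), so a single `M` works for all `t`. The identity then
  holds in the polynomial ring `E[t]`, and its coefficient of `t` gives `M (ζ - 1) x = 0`, a
  contradiction.
-/

/-! ### Finite-dimensional algebras generated by a torsion element and a twisting element -/

/-- A subspace stable under right multiplication by `T` is stable under right multiplication by
the algebra generated by `T`. -/
theorem mul_mem_of_mem_adjoin {P A : Type*} [Field P] [Ring A] [Algebra P A] {T : Set A}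
    (W : Submodule P A) (hW : ∀ s ∈ T, ∀ w ∈ W, w * s ∈ W) {z : A}
    (hz : z ∈ Algebra.adjoin P T) : ∀ w ∈ W, w * z ∈ W := by
  induction hz using Algebra.adjoin_induction with
  | mem x hx => exact hW x hx
  | algebraMap r =>
    intro w hw
    rw [← Algebra.commutes, ← Algebra.smul_def]
    exact W.smul_mem r hw
  | add x y _ _ hx hy =>
    intro w hw
    rw [mul_add]
    exact W.add_mem (hx w hw) (hy w hw)
  | mul x y _ _ hx hy =>
    intro w hw
    rw [← mul_assoc]
    exact hy _ (hx w hw)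

/-- If some finite-dimensional subspace contains `1` and is right-stable under `T`, then `T`
generates a finite-dimensional algebra. -/
theorem finite_adjoin_of_stable {P A : Type*} [Field P] [Ring A] [Algebra P A] {T : Set A}
    (W : Submodule P A) [Module.Finite P W] (h1 : (1 : A) ∈ W)
    (hW : ∀ s ∈ T, ∀ w ∈ W, w * s ∈ W) : Module.Finite P (Algebra.adjoin P T) := by
  have hle : Subalgebra.toSubmodule (Algebra.adjoin P T) ≤ W := by
    intro z hz
    have := mul_mem_of_mem_adjoin W hW (z := z) hz 1 h1
    rwa [one_mul] at this
  exact Submodule.finiteDimensional_of_le hle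

theorem inv_mem_of_finite {P D : Type*} [Field P] [DivisionRing D] [Algebra P D]
    (S : Subalgebra P D) [Module.Finite P S] {z : D} (hz : z ∈ S) : z⁻¹ ∈ S := by
  rcases eq_or_ne z 0 with rfl | h0
  · simp
  let f : S →ₗ[P] S := LinearMap.mulLeft P (⟨z, hz⟩ : S)
  have hf : Function.Injective f := by
    intro u v huv
    have h := congrArg (fun s : S => (s : D)) huv
    exact Subtype.ext (mul_left_cancel₀ h0 (by simpa [f] using h))
  obtain ⟨y, hy⟩ := (LinearMap.injective_iff_surjective.mp hf) 1
  have h := congrArg (fun s : S => (s : D)) hy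
  have h2 : z * (y : D) = 1 := by simpa [f] using h
  rw [inv_eq_of_mul_eq_one_right h2]
  exact y.2

/-- The span of the monomials `a ^ l * x ^ j` with `j < n`. -/
def monoSpan (P : Type*) {D : Type*} [Field P] [DivisionRing D] [Algebra P D] (a x : D) (n : ℕ) :
    Submodule P D :=
  Submodule.span P {z | ∃ l j : ℕ, j < n ∧ z = a ^ l * x ^ j}

section
variable {P D : Type*} [Field P] [DivisionRing D] [Algebra P D]

theorem finite_monoSpan {a : D} (x : D) {m : ℕ} (hm : 0 < m) (ha : a ^ m = 1) (n : ℕ) :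
    Module.Finite P (monoSpan P a x n) := by
  have : {z : D | ∃ l j : ℕ, j < n ∧ z = a ^ l * x ^ j}.Finite := by
    refine ((Set.finite_Iio m).image2 (fun l j : ℕ => a ^ l * x ^ j) (Set.finite_Iio n)).subset ?_
    rintro z ⟨l, j, hj, rfl⟩
    refine ⟨l % m, Nat.mod_lt _ hm, j, hj, ?_⟩
    simp only
    rw [← pow_eq_pow_mod l ha]
  exact Module.Finite.span_of_finite P this

theorem monoSpan_mono (a x : D) {n k : ℕ} (h : n ≤ k) : monoSpan P a x n ≤ monoSpan P a x k :=
  Submodule.span_mono fun _ ⟨l, j, hj, e⟩ => ⟨l, j, hj.trans_le h, e⟩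

theorem one_mem_monoSpan (a x : D) {n : ℕ} (hn : 0 < n) : (1 : D) ∈ monoSpan P a x n :=
  Submodule.subset_span ⟨0, 0, hn, by simp⟩

theorem pow_mul_of_twist {A : Type*} [Monoid A] {a x : A} {i : ℕ} (h : x * a = a ^ i * x)
    (j : ℕ) : x ^ j * a = a ^ i ^ j * x ^ j := by
  induction j with
  | zero => simp
  | succ j ih =>
    have hs : SemiconjBy x a (a ^ i) := h
    have h2 : x * a ^ i ^ j = (a ^ i) ^ i ^ j * x := hs.pow_right _
    rw [pow_succ' x, mul_assoc, ih, ← mul_assoc, h2, ← pow_mul, mul_assoc, pow_succ' i]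

theorem monoSpan_mul_left {a x : D} {n : ℕ} (l : ℕ) :
    ∀ w ∈ monoSpan P a x n, a ^ l * w ∈ monoSpan P a x n := by
  intro w hw
  induction hw using Submodule.span_induction with
  | mem z hz =>
    obtain ⟨k, j, hj, rfl⟩ := hz
    exact Submodule.subset_span ⟨l + k, j, hj, by rw [pow_add, mul_assoc]⟩
  | zero => simp
  | add u v _ _ hu hv => rw [mul_add]; exact add_mem hu hv
  | smul c u _ hu => rw [mul_smul_comm]; exact Submodule.smul_mem _ _ hu

theorem monoSpan_mul_a {a x : D} {i : ℕ} (h : x * a = a ^ i * x) {n : ℕ} :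
    ∀ w ∈ monoSpan P a x n, w * a ∈ monoSpan P a x n := by
  intro w hw
  induction hw using Submodule.span_induction with
  | mem z hz =>
    obtain ⟨k, j, hj, rfl⟩ := hz
    refine Submodule.subset_span ⟨k + i ^ j, j, hj, ?_⟩
    rw [mul_assoc, pow_mul_of_twist h, pow_add, mul_assoc]
  | zero => simp
  | add u v _ _ hu hv => rw [add_mul]; exact add_mem hu hv
  | smul c u _ hu => rw [smul_mul_assoc]; exact Submodule.smul_mem _ _ hu

theorem monoSpan_mul_x {a x : D} {n : ℕ} :
    ∀ w ∈ monoSpan P a x n, w * x ∈ monoSpan P a x (n + 1) := by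
  intro w hw
  induction hw using Submodule.span_induction with
  | mem z hz =>
    obtain ⟨k, j, hj, rfl⟩ := hz
    exact Submodule.subset_span ⟨k, j + 1, by omega, by rw [mul_assoc, pow_succ]⟩
  | zero => simp
  | add u v _ _ hu hv => rw [add_mul]; exact add_mem hu hv
  | smul c u _ hu => rw [smul_mul_assoc]; exact Submodule.smul_mem _ _ hu

theorem exists_mem_monoSpan {a x : D} {i : ℕ} (h : x * a = a ^ i * x) {z : D}
    (hz : z ∈ Algebra.adjoin P {a, x}) : ∃ n, z ∈ monoSpan P a x n := by
  suffices ∀ w : D, (∃ n, w ∈ monoSpan P a x n) → ∃ n, w * z ∈ monoSpan P a x n by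
    simpa using this 1 ⟨1, one_mem_monoSpan a x one_pos⟩
  induction hz using Algebra.adjoin_induction with
  | mem y hy =>
    rintro w ⟨n, hw⟩
    rcases hy with rfl | rfl
    · exact ⟨n, monoSpan_mul_a h w hw⟩
    · exact ⟨n + 1, monoSpan_mul_x w hw⟩
  | algebraMap r =>
    rintro w ⟨n, hw⟩
    rw [← Algebra.commutes, ← Algebra.smul_def]
    exact ⟨n, Submodule.smul_mem _ r hw⟩
  | add u v _ _ hu hv =>
    rintro w hw
    obtain ⟨n, hn⟩ := hu w hw
    obtain ⟨k, hk⟩ := hv w hw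
    rw [mul_add]
    exact ⟨max n k, add_mem (monoSpan_mono _ _ (le_max_left _ _) hn)
      (monoSpan_mono _ _ (le_max_right _ _) hk)⟩
  | mul u v _ _ hu hv =>
    rintro w hw
    rw [← mul_assoc]
    exact hv _ (hu w hw)

/-- If `x⁻¹` is a polynomial in `a` and `x`, then `x` is algebraic: `x⁻¹` has degree less than
some `n` in `x`, and the monomials of degree less than `n` are then right-stable under `x⁻¹`. -/
theorem finite_adjoin_inv {a x : D} {i m : ℕ} (h : x * a = a ^ i * x) (hx : x ≠ 0) (hm : 0 < m)
    (ha : a ^ m = 1) (hinv : x⁻¹ ∈ Algebra.adjoin P {a, x}) :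
    Module.Finite P (Algebra.adjoin P {a, x⁻¹}) := by
  obtain ⟨n₀, hn₀⟩ := exists_mem_monoSpan h hinv
  have hn := monoSpan_mono (P := P) a x (Nat.le_succ n₀) hn₀
  have := finite_monoSpan (P := P) x hm ha (n₀ + 1)
  refine finite_adjoin_of_stable (monoSpan P a x (n₀ + 1))
    (one_mem_monoSpan a x n₀.succ_pos) ?_
  rintro s (rfl | rfl)
  · exact monoSpan_mul_a h
  intro w hw
  induction hw using Submodule.span_induction with
  | mem z hz =>
    obtain ⟨k, j, hj, rfl⟩ := hz
    rcases j with _ | j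
    · rw [pow_zero, mul_one]
      exact monoSpan_mul_left k _ hn
    · refine Submodule.subset_span ⟨k, j, by omega, ?_⟩
      rw [pow_succ, mul_assoc, mul_assoc, mul_inv_cancel₀ hx, mul_one]
  | zero => simp
  | add u v _ _ hu hv => rw [add_mul]; exact add_mem hu hv
  | smul c u _ hu => rw [smul_mul_assoc]; exact Submodule.smul_mem _ _ hu

end

/-- If `a` is torsion and a power of `x` commutes with `a`, then `a` and `x` generate a
finite-dimensional algebra over the center, provided they generate the division ring, in the
sense that whatever commutes with both is central. -/
theorem finite_adjoin_center {E : Type*} [DivisionRing E] {a x : E} {i m r : ℕ}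
    (h : x * a = a ^ i * x) (hm : 0 < m) (ha : a ^ m = 1) (hr : 0 < r)
    (hxr : Commute (x ^ r) a)
    (hc : ∀ z : E, Commute z a → Commute z x → z ∈ Subring.center E) :
    Module.Finite (Subring.center E) (Algebra.adjoin (Subring.center E) {a, x}) := by
  have := finite_monoSpan (P := Subring.center E) x hm ha r
  refine finite_adjoin_of_stable (monoSpan (Subring.center E) a x r)
    (one_mem_monoSpan a x hr) ?_
  rintro s (rfl | rfl)
  · exact monoSpan_mul_a h
  intro w hw
  induction hw using Submodule.span_induction with
  | mem z hz =>
    obtain ⟨k, j, hj, rfl⟩ := hz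
    rcases (Nat.succ_le_of_lt hj).lt_or_eq with hj' | hj'
    · exact Submodule.subset_span ⟨k, j + 1, hj', by rw [mul_assoc, pow_succ]⟩
    ·
      -- here `x ^ r` is a central scalar
      have hs := hc _ hxr ((Commute.refl s).pow_left r)
      have : a ^ k * s ^ j * s = (⟨s ^ r, hs⟩ : Subring.center E) • (a ^ k * s ^ 0) := by
        rw [Subring.smul_def, smul_eq_mul, mul_assoc, ← pow_succ, ← Nat.succ_eq_add_one, hj',
          pow_zero, mul_one]
        exact ((hxr.pow_right k).eq).symm
      rw [this]
      exact Submodule.smul_mem _ _ (Submodule.subset_span ⟨k, 0, hr, rfl⟩)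
  | zero => simp
  | add u v _ _ hu hv => rw [add_mul]; exact add_mem hu hv
  | smul c u _ hu => rw [smul_mul_assoc]; exact Submodule.smul_mem _ _ hu

/-- The commutator `w = a * b * a⁻¹ * b⁻¹`, if torsion modulo the center, is torsion, by
taking norms from a finite-dimensional algebra over the center. -/
theorem commutator_torsion {E : Type*} [DivisionRing E] {a x b w : E} {i m r n : ℕ}
    (h : x * a = a ^ i * x) (hm : 0 < m) (ha : a ^ m = 1) (hr : 0 < r)
    (hxr : Commute (x ^ r) a)
    (hc : ∀ z : E, Commute z a → Commute z x → z ∈ Subring.center E)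
    (hb : b ∈ Algebra.adjoin (Subring.center E) {a, x}) (hb0 : b ≠ 0)
    (hw : w * b * a = a * b) (hn : 0 < n) (hwa : Commute (w ^ n) a) (hwx : Commute (w ^ n) x) :
    ∃ M, 0 < M ∧ w ^ M = 1 := by
  have hfin := finite_adjoin_center h hm ha hr hxr hc
  set Z := Subring.center E
  set S := Algebra.adjoin Z {a, x}
  have ha0 : a ≠ 0 := by
    rintro rfl
    rw [zero_pow hm.ne'] at ha
    exact zero_ne_one ha
  have haS : a ∈ S := Algebra.subset_adjoin (by simp)
  have hwS : w ∈ S := by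
    have : w = a * b * (a⁻¹ * b⁻¹) := by
      rw [← hw, mul_assoc (w * b), mul_inv_cancel_left₀ ha0, mul_assoc, mul_inv_cancel₀ hb0,
        mul_one]
    rw [this]
    exact mul_mem (mul_mem haS hb) (mul_mem (inv_mem_of_finite S haS) (inv_mem_of_finite S hb))
  have unit : ∀ z (hz : z ∈ S), z ≠ 0 → IsUnit (⟨z, hz⟩ : S) := fun z hz h0 =>
    ⟨⟨⟨z, hz⟩, ⟨z⁻¹, inv_mem_of_finite S hz⟩, Subtype.ext (mul_inv_cancel₀ h0),
      Subtype.ext (inv_mul_cancel₀ h0)⟩, rfl⟩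
  have hna := ((unit a haS ha0).map (Algebra.norm Z)).ne_zero
  have hnb := ((unit b hb hb0).map (Algebra.norm Z)).ne_zero
  have hN : Algebra.norm Z (⟨w, hwS⟩ : S) = 1 := by
    have e : (⟨w, hwS⟩ : S) * ⟨b, hb⟩ * ⟨a, haS⟩ = ⟨a, haS⟩ * ⟨b, hb⟩ := Subtype.ext hw
    have e2 := congrArg (Algebra.norm Z) e
    simp only [map_mul] at e2
    refine mul_right_cancel₀ (mul_ne_zero hna hnb) ?_
    rw [one_mul, mul_comm (Algebra.norm Z (⟨a, haS⟩ : S)), ← mul_assoc, e2, mul_comm]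
  have hz := hc _ hwa hwx
  have e : (⟨w, hwS⟩ : S) ^ n = algebraMap Z S ⟨w ^ n, hz⟩ := Subtype.ext rfl
  have e2 := congrArg (Algebra.norm Z) e
  rw [map_pow, hN, one_pow, Algebra.norm_algebraMap] at e2
  have e3 := congrArg (fun z : Z => (z : E)) e2
  refine ⟨n * Module.finrank Z S, Nat.mul_pos hn Module.finrank_pos, ?_⟩
  rw [pow_mul]
  simpa using e3.symm

/-! ### First-order expansions -/

/-- Binomial expansion to first order in `x`, in a ring whose elements can be moved across `x`. -/
theorem exists_pow_eq_first_order {A : Type*} [Ring A] (R : Subring A) {x : A}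
    (hR : ∀ r ∈ R, ∃ r' ∈ R, x * r = r' * x) (hx : x ∈ R) {β u : A} (hβ : β ∈ R)
    (hu : ∃ g ∈ R, u = 1 + β * x + g * x ^ 2) (M : ℕ) :
    ∃ g ∈ R, u ^ M = 1 + M * β * x + g * x ^ 2 := by
  obtain ⟨h, hh, rfl⟩ := hu
  have hu : 1 + β * x + h * x ^ 2 ∈ R :=
    add_mem (add_mem (one_mem R) (mul_mem hβ hx)) (mul_mem hh (pow_mem hx 2))
  induction M with
  | zero => exact ⟨0, zero_mem R, by simp⟩
  | succ M ih =>
    obtain ⟨g, hg, e⟩ := ih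
    obtain ⟨β', hβ', e1⟩ := hR β hβ
    obtain ⟨u₁, hu₁, e2⟩ := hR _ hu
    obtain ⟨u₂, hu₂, e3⟩ := hR _ hu₁
    obtain ⟨h', hh', e4⟩ := hR h hh
    have hM : (M : A) ∈ R := natCast_mem R M
    refine ⟨h + M * β * (β' + h' * x) + g * u₂, add_mem (add_mem hh (mul_mem (mul_mem hM hβ)
      (add_mem hβ' (mul_mem hh' hx)))) (mul_mem hg hu₂), ?_⟩
    have e5 : x ^ 2 * (1 + β * x + h * x ^ 2) = u₂ * x ^ 2 := by
      rw [pow_two x, mul_assoc, ← pow_two x, e2, ← mul_assoc, e3, mul_assoc, pow_two]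
    have e6 : x * (1 + β * x + h * x ^ 2) = x + (β' + h' * x) * x ^ 2 := by
      rw [mul_add, mul_add, mul_one, ← mul_assoc, ← mul_assoc, e1, e4]
      noncomm_ring
    rw [pow_succ, e, add_mul, mul_assoc g, e5, add_mul, mul_assoc (_ * β) x, e6, one_mul]
    push_cast
    noncomm_ring

/-- First-order expansion of the identity expressing that
`(1 + ζ * x) * (1 + α * x)⁻¹` is an `M`-th root of unity, with the denominator cleared by
`(1 + α * x) * ∑ k < r, (-(α * x)) ^ k = 1 - (-(α * x)) ^ r`. -/
theorem exists_first_order {A : Type*} [Ring A] (R : Subring A) {x : A}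
    (hR : ∀ r ∈ R, ∃ r' ∈ R, x * r = r' * x) (hx : x ∈ R) {α ζ : A} (hα : α ∈ R) (hζ : ζ ∈ R)
    {r : ℕ} (hr : 2 ≤ r) (M : ℕ) :
    ∃ g ∈ R, ((1 + ζ * x) * ∑ k ∈ Finset.range r, (-(α * x)) ^ k) ^ M
      - (1 - (-(α * x)) ^ r) ^ M = M * (ζ - α) * x + g * x ^ 2 := by
  obtain ⟨r, rfl⟩ := Nat.exists_eq_add_of_le' hr
  obtain ⟨α', hα', e1⟩ := hR α hα
  set v := -(α * x) with hv
  have hvR : v ∈ R := neg_mem (mul_mem hα hx)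
  have hv2 : v ^ 2 = α * α' * x ^ 2 := by
    rw [hv, neg_pow_two, pow_two, mul_assoc, ← mul_assoc x, e1]
    noncomm_ring
  have hαα := mul_mem hα hα'
  obtain ⟨g₁, hg₁, e2⟩ := exists_pow_eq_first_order R hR hx (β := 0) (u := 1 - v ^ (r + 2))
    (zero_mem R) ⟨-(v ^ r * (α * α')), neg_mem (mul_mem (pow_mem hvR r) hαα), by
      rw [pow_add, hv2]; noncomm_ring⟩ M
  obtain ⟨α₁, hα₁, e3⟩ := hR α hα
  have hsum : ∑ k ∈ Finset.range (r + 2), v ^ k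
      = 1 + v + (∑ k ∈ Finset.range r, v ^ k) * (α * α') * x ^ 2 := by
    rw [Finset.sum_range_succ', Finset.sum_range_succ', mul_assoc, ← hv2, Finset.sum_mul]
    simp only [pow_zero, zero_add, pow_one, ← pow_add, add_assoc, one_add_one_eq_two]
    abel
  have hs : ∑ k ∈ Finset.range r, v ^ k ∈ R := sum_mem fun k _ => pow_mem hvR k
  obtain ⟨g₂, hg₂, e4⟩ := exists_pow_eq_first_order R hR hx (β := ζ - α)
    (u := (1 + ζ * x) * ∑ k ∈ Finset.range (r + 2), v ^ k)
    (sub_mem hζ hα) ⟨(1 + ζ * x) * ((∑ k ∈ Finset.range r, v ^ k) * (α * α')) - ζ * α',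
      sub_mem (mul_mem (add_mem (one_mem R) (mul_mem hζ hx)) (mul_mem hs hαα))
        (mul_mem hζ hα'), by
      have : ζ * x * v = - (ζ * α' * x ^ 2) := by
        rw [hv, mul_neg, mul_assoc, ← mul_assoc x, e1]
        noncomm_ring
      rw [hsum, mul_add, mul_add, add_mul _ _ v, this, hv]
      noncomm_ring⟩ M
  refine ⟨g₂ - g₁, sub_mem hg₂ hg₁, ?_⟩
  rw [e4, e2]
  noncomm_ring

/-! ### Torsion elements of division rings -/

/-- In characteristic `p` a division ring has no element of order `p`. -/
theorem orderOf_cast_ne_zero {E : Type*} [DivisionRing E] {w : E} (hw : 0 < orderOf w) :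
    (orderOf w : E) ≠ 0 := by
  obtain ⟨p, hp⟩ := CharP.exists E
  rcases CharP.char_is_prime_or_zero E p with hpp | rfl
  · have := Fact.mk hpp
    intro h0
    obtain ⟨k, hk⟩ := (CharP.cast_eq_zero_iff E p _).mp h0
    have h1 : (w ^ k - 1) ^ p = 0 := by
      rw [sub_pow_char_of_commute p (Commute.one_right _), ← pow_mul, mul_comm k, ← hk,
        pow_orderOf_eq_one, one_pow, sub_self]
    have h2 : w ^ k = 1 := sub_eq_zero.mp (pow_eq_zero_iff hpp.ne_zero |>.mp h1)
    have hk0 : 0 < k := by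
      rcases Nat.eq_zero_or_pos k with rfl | h
      · simp [hk] at hw
      · exact h
    have := orderOf_le_of_pow_eq_one hk0 h2
    nlinarith [hpp.two_le]
  · have := CharP.charP_to_charZero E
    exact Nat.cast_ne_zero.mpr hw.ne'

/-- A prime power `q ^ k` dividing `n` is at most twice its totient, so divides `(2 * d)!`. -/
theorem dvd_factorial_of_totient_le {n d : ℕ} (hn : 0 < n) (h : n.totient ≤ d) :
    n ∣ (2 * d).factorial := by
  rw [Nat.dvd_iff_prime_pow_dvd_dvd]
  intro p k hp hk
  refine Nat.dvd_factorial (pow_pos hp.pos k) ?_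
  rcases k with _ | k
  · have := Nat.totient_pos.mpr hn
    rw [pow_zero]
    omega
  · have h1 := Nat.le_of_dvd (Nat.totient_pos.mpr hn) (Nat.totient_dvd_of_dvd hk)
    rw [Nat.totient_prime_pow_succ hp] at h1
    have h2 : p ≤ 2 * (p - 1) := by have := hp.two_le; omega
    calc p ^ (k + 1) = p ^ k * p := pow_succ _ _
      _ ≤ p ^ k * (2 * (p - 1)) := Nat.mul_le_mul_left _ h2
      _ = 2 * (p ^ k * (p - 1)) := by ring
      _ ≤ 2 * d := Nat.mul_le_mul_left _ (h1.trans h)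

/-- The orders of the torsion elements of a finite-dimensional rational domain are bounded:
the minimal polynomial of an element of order `n` is the `n`-th cyclotomic polynomial. -/
theorem orderOf_dvd_factorial {S : Type*} [Ring S] [IsDomain S] [Algebra ℚ S] [Module.Finite ℚ S]
    {w : S} (hw : 0 < orderOf w) : orderOf w ∣ (2 * Module.finrank ℚ S).factorial := by
  refine dvd_factorial_of_totient_le hw ?_
  set n := orderOf w with hn
  have hint : IsIntegral ℚ w := Algebra.IsIntegral.isIntegral w
  have hprime : Prime (minpoly ℚ w) := (minpoly.irreducible hint).prime
  have hdvd : minpoly ℚ w ∣ ∏ i ∈ n.divisors, Polynomial.cyclotomic i ℚ := by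
    rw [Polynomial.prod_cyclotomic_eq_X_pow_sub_one hw]
    apply minpoly.dvd
    simp [hn, pow_orderOf_eq_one]
  obtain ⟨i, hi, hdi⟩ := (Prime.dvd_finsetProd_iff hprime _).mp hdvd
  have hi0 : 0 < i := Nat.pos_of_mem_divisors hi
  have hi1 : w ^ i = 1 := by
    have h := hdi.trans (Polynomial.cyclotomic.dvd_X_pow_sub_one i ℚ)
    have h2 : Polynomial.aeval w (Polynomial.X ^ i - 1 : Polynomial ℚ) = 0 := by
      obtain ⟨q, hq⟩ := h
      rw [hq, map_mul, minpoly.aeval, zero_mul]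
    simpa [sub_eq_zero] using h2
  have hin : i = n := Nat.dvd_antisymm (Nat.dvd_of_mem_divisors hi) (orderOf_dvd_of_pow_eq_one hi1)
  rw [hin] at hdi hi0
  have h0 : Polynomial.aeval w (Polynomial.cyclotomic n ℚ) = 0 := by
    obtain ⟨q, hq⟩ := hdi
    rw [hq, map_mul, minpoly.aeval, zero_mul]
  have h := minpoly.eq_of_irreducible_of_monic (Polynomial.cyclotomic.irreducible_rat hi0) h0
    (Polynomial.cyclotomic.monic n ℚ)
  rw [← Polynomial.natDegree_cyclotomic n ℚ, h]
  exact minpoly.natDegree_le w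

/-- A polynomial over a division ring of characteristic zero that vanishes at all natural numbers
is zero: apply rational linear functionals to its coefficients. -/
theorem polynomial_eq_zero_of_eval_nat {E : Type*} [DivisionRing E] [CharZero E]
    {Q : Polynomial E} (h : ∀ t : ℕ, Q.eval (t : E) = 0) : Q = 0 := by
  ext k
  rw [Polynomial.coeff_zero, ← Module.forall_dual_apply_eq_zero_iff ℚ]
  intro φ
  let q : Polynomial ℚ := ∑ j ∈ Finset.range (max (Q.natDegree + 1) (k + 1)),
    Polynomial.monomial j (φ (Q.coeff j))
  have hq : q = 0 := by
    refine Polynomial.eq_zero_of_infinite_isRoot q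
      ((Set.infinite_range_of_injective (Nat.cast_injective (R := ℚ))).mono ?_)
    rintro _ ⟨t, rfl⟩
    have e := congrArg φ (h t)
    rw [Polynomial.eval_eq_sum_range' (n := max (Q.natDegree + 1) (k + 1)) (by omega),
      map_sum, map_zero] at e
    rw [Set.mem_ofPred_eq, Polynomial.IsRoot, Polynomial.eval_finsetSum, ← e]
    refine Finset.sum_congr rfl fun j _ => ?_
    have : Q.coeff j * (t : E) ^ j = ((t : ℚ) ^ j) • Q.coeff j := by
      rw [Algebra.smul_def, map_pow, map_natCast]
      exact ((Nat.cast_commute t _).pow_left j).eq.symm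
    rw [Polynomial.eval_monomial, this, map_smul, smul_eq_mul, mul_comm]
  have h2 := congrArg (fun p : Polynomial ℚ => p.coeff k) hq
  simpa [q, Polynomial.finsetSum_coeff, Polynomial.coeff_monomial] using h2

/-! ### Division rings generated by a twisted pair -/

/-- A torsion element `a` that conjugation by `x` carries to a different power `a ^ i` of itself,
in a division ring generated by `a` and `x`. Generation is encoded by `center`: whatever commutes
with both `a` and `x` is central. The exponents `m` and `r` are merely some exponents with
`a ^ m = 1` and `x ^ r` commuting with `a`; neither is assumed minimal. -/
structure TwistedPair {E : Type*} [DivisionRing E] (a x : E) (i m r : ℕ) : Prop where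
  twist : x * a = a ^ i * x
  x_ne : x ≠ 0
  pow_ne : a ^ i ≠ a
  m_pos : 0 < m
  pow_m : a ^ m = 1
  two_le : 2 ≤ r
  commute_pow : Commute (x ^ r) a
  center : ∀ z : E, Commute z a → Commute z x → z ∈ Subring.center E

namespace TwistedPair
variable {E : Type*} [DivisionRing E] {a x : E} {i m r : ℕ}

theorem a_ne (T : TwistedPair a x i m r) : a ≠ 0 := by
  rintro rfl
  have := T.pow_m
  rw [zero_pow T.m_pos.ne'] at this
  exact zero_ne_one this

theorem not_commute (T : TwistedPair a x i m r) : ¬ Commute x a := by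
  intro h
  exact T.pow_ne (mul_right_cancel₀ T.x_ne (T.twist.symm.trans (h.eq.trans rfl)).symm).symm

theorem one_add_ne (T : TwistedPair a x i m r) (t : ℕ) : 1 + x * (t : E) ≠ 0 := by
  intro h
  have h1 : x * (t : E) = -1 := by rw [eq_neg_iff_add_eq_zero, add_comm]; exact h
  have ht : (t : E) ≠ 0 := by
    intro h0
    rw [h0, mul_zero] at h1
    exact one_ne_zero (neg_eq_zero.mp h1.symm)
  apply T.not_commute
  rw [(eq_mul_inv_iff_mul_eq₀ ht).mpr h1]
  exact ((Commute.one_left a).neg_left).mul_left (Nat.cast_commute t a).inv_left₀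

/-- The commutator of `a` and `1 + x * t` is `(1 + ζ * x * t) * (1 + x * t)⁻¹`, where
`ζ = a * (a ^ i)⁻¹`. -/
theorem commutator_eq (T : TwistedPair a x i m r) {t : ℕ} {w : E}
    (hw : w * (1 + x * t) * a = a * (1 + x * t)) :
    w * (1 + x * t) = 1 + a * (a ^ i)⁻¹ * x * t := by
  refine mul_right_cancel₀ T.a_ne (hw.trans ?_)
  have h : (a ^ i)⁻¹ * (x * a) = x := by
    rw [T.twist, inv_mul_cancel_left₀ (pow_ne_zero i T.a_ne)]
  have h2 : a * (a ^ i)⁻¹ * x * t * a = a * x * t := by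
    rw [mul_assoc _ (t : E), (Nat.cast_commute t a).eq, ← mul_assoc, mul_assoc _ x, mul_assoc a, h]
  rw [add_mul, h2, one_mul, mul_add, mul_one, mul_assoc]

theorem root_of_unity_identity (T : TwistedPair a x i m r) {t M : ℕ} {w : E}
    (hw : w * (1 + x * t) * a = a * (1 + x * t)) (hM : w ^ M = 1) :
    ((1 + a * (a ^ i)⁻¹ * x * t) * ∑ k ∈ Finset.range r, (-(x * (t : E))) ^ k) ^ M
      - (1 - (-(x * (t : E))) ^ r) ^ M = 0 := by
  have hxr : x ^ r ∈ Subring.center E :=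
    T.center _ T.commute_pow ((Commute.refl x).pow_left r)
  have hc : (1 - (-(x * (t : E))) ^ r) ∈ Subring.center E := by
    have : (-(x * (t : E))) ^ r = (-1) ^ r * x ^ r * (t : E) ^ r := by
      rw [neg_pow, (Nat.commute_cast x t).mul_pow, mul_assoc]
    rw [this]
    exact sub_mem (one_mem _) (mul_mem (mul_mem (pow_mem (neg_mem (one_mem _)) r) hxr)
      (pow_mem (natCast_mem _ t) r))
  have hcw : Commute w (1 - (-(x * (t : E))) ^ r) := (Subring.mem_center_iff.mp hc w)
  have hs := mul_neg_geom_sum (-(x * (t : E))) r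
  rw [sub_neg_eq_add] at hs
  rw [← T.commutator_eq hw, mul_assoc, hs, hcw.mul_pow, hM, one_mul, sub_self]

/-- If the commutator of `a` and `1 + x` is torsion, comparing the first-order terms of a power
equal to `1` shows that `x⁻¹` is a polynomial in `a` and `x`. -/
theorem inv_mem_adjoin (T : TwistedPair a x i m r) (P : Type*) [Field P] [Algebra P E] {w : E}
    (hw : w * (1 + x * (1 : ℕ)) * a = a * (1 + x * (1 : ℕ))) (hM : 0 < orderOf w) :
    x⁻¹ ∈ Algebra.adjoin P {a, x} := by
  have hid := T.root_of_unity_identity hw (pow_orderOf_eq_one w)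
  have hfin : Module.Finite P (Algebra.adjoin P {a}) := by
    have := finite_monoSpan (P := P) x T.m_pos T.pow_m 1
    refine finite_adjoin_of_stable (monoSpan P a x 1) (one_mem_monoSpan a x one_pos) ?_
    rintro s rfl
    exact monoSpan_mul_a T.twist
  have hle : Algebra.adjoin P {a} ≤ Algebra.adjoin P {a, x} :=
    Algebra.adjoin_mono (by simp)
  have ha : a ∈ Algebra.adjoin P {a} := Algebra.subset_adjoin rfl
  have hx : x ∈ Algebra.adjoin P {a, x} := Algebra.subset_adjoin (by simp)
  have hζ : a * (a ^ i)⁻¹ ∈ Algebra.adjoin P {a} :=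
    mul_mem ha (inv_mem_of_finite _ (pow_mem ha i))
  have hR : ∀ s ∈ (Algebra.adjoin P {a, x}).toSubring,
      ∃ s' ∈ (Algebra.adjoin P {a, x}).toSubring, x * s = s' * x := by
    intro s hs
    have hs : s ∈ Algebra.adjoin P {a, x} := hs
    change ∃ s' ∈ Algebra.adjoin P {a, x}, x * s = s' * x
    induction hs using Algebra.adjoin_induction with
    | mem y hy =>
      rcases hy with rfl | rfl
      · exact ⟨_, pow_mem (hle ha) i, T.twist⟩
      · exact ⟨_, hx, rfl⟩
    | algebraMap c => exact ⟨_, Subalgebra.algebraMap_mem _ c, (Algebra.commutes c x).symm⟩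
    | add u v _ _ hu hv =>
      obtain ⟨u', hu', e⟩ := hu ‹_›
      obtain ⟨v', hv', e'⟩ := hv ‹_›
      exact ⟨_, add_mem hu' hv', by rw [mul_add, e, e', add_mul]⟩
    | mul u v _ _ hu hv =>
      obtain ⟨u', hu', e⟩ := hu ‹_›
      obtain ⟨v', hv', e'⟩ := hv ‹_›
      exact ⟨_, mul_mem hu' hv', by rw [← mul_assoc, e, mul_assoc, e', mul_assoc]⟩
  obtain ⟨g, hg, e⟩ := exists_first_order _ hR hx (α := 1) (ζ := a * (a ^ i)⁻¹)
    (one_mem _) (hle hζ) T.two_le (orderOf w)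
  simp only [Nat.cast_one, mul_one] at hid
  simp only [one_mul] at e
  rw [hid] at e
  set β := (orderOf w : E) * (a * (a ^ i)⁻¹ - 1) with hβ
  have hβ0 : β ≠ 0 := by
    refine mul_ne_zero (orderOf_cast_ne_zero hM) (sub_ne_zero.mpr fun h => T.pow_ne ?_)
    exact ((mul_inv_eq_one₀ (pow_ne_zero i T.a_ne)).mp h).symm
  have hβm : β ∈ Algebra.adjoin P {a} := mul_mem (natCast_mem _ _) (sub_mem hζ (one_mem _))
  have e1 : β = -g * x := by
    refine mul_right_cancel₀ T.x_ne ?_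
    rw [mul_assoc (-g), ← pow_two, neg_mul]
    exact eq_neg_of_add_eq_zero_left e.symm
  have e2 : x⁻¹ = β⁻¹ * -g := by
    refine inv_eq_of_mul_eq_one_left ?_
    rw [mul_assoc, ← e1, inv_mul_cancel₀ hβ0]
  rw [e2]
  exact mul_mem (hle (inv_mem_of_finite _ hβm)) (neg_mem hg)

/-- The commutators of `a` with the elements `1 + x * t` cannot all be torsion modulo the
center. -/
theorem contradiction (T : TwistedPair a x i m r)
    (H : ∀ (t : ℕ) (w : E), w * (1 + x * t) * a = a * (1 + x * t) →
      ∃ n, 0 < n ∧ Commute (w ^ n) a ∧ Commute (w ^ n) x) : False := by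
  have hw : ∀ t : ℕ, ∃ w : E, w * (1 + x * t) * a = a * (1 + x * t) ∧ 0 < orderOf w := by
    intro t
    let w := a * (1 + x * (t : E)) * a⁻¹ * (1 + x * (t : E))⁻¹
    have e : w * (1 + x * t) * a = a * (1 + x * t) := by
      rw [inv_mul_cancel_right₀ (T.one_add_ne t), inv_mul_cancel_right₀ T.a_ne]
    obtain ⟨n, hn, hna, hnx⟩ := H t w e
    obtain ⟨M, hM, hwM⟩ := commutator_torsion T.twist T.m_pos T.pow_m (by linarith [T.two_le])
      T.commute_pow T.center (add_mem (one_mem _) (mul_mem (Algebra.subset_adjoin (by simp))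
      (natCast_mem _ t))) (T.one_add_ne t) e hn hna hnx
    exact ⟨w, e, orderOf_pos_iff.mpr (isOfFinOrder_iff_pow_eq_one.mpr ⟨M, hM, hwM⟩)⟩
  obtain ⟨w₁, e₁, h₁⟩ := hw 1
  obtain ⟨p, hp⟩ := CharP.exists E
  rcases CharP.char_is_prime_or_zero E p with hpp | rfl
  ·
    -- in positive characteristic `a` and `x⁻¹` generate a finite domain, hence commute
    have := Fact.mk hpp
    let _ := ZMod.algebra E p
    have hfin := finite_adjoin_inv T.twist T.x_ne T.m_pos T.pow_m
      (T.inv_mem_adjoin (ZMod p) e₁ h₁)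
    have : Finite (Algebra.adjoin (ZMod p) {a, x⁻¹}) := Module.finite_of_finite (ZMod p)
    have hcomm := (Finite.isDomain_to_isField (Algebra.adjoin (ZMod p) {a, x⁻¹})).mul_comm
      ⟨x⁻¹, Algebra.subset_adjoin (by simp)⟩ ⟨a, Algebra.subset_adjoin (by simp)⟩
    have hcomm : Commute x⁻¹ a := congrArg Subtype.val hcomm
    exact T.not_commute (Commute.inv_left_iff₀.mp hcomm)
  ·
    -- in characteristic zero one exponent works for all `t`, giving a polynomial identity in `t`
    have := CharP.charP_to_charZero E
    have hfin := finite_adjoin_inv T.twist T.x_ne T.m_pos T.pow_m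
      (T.inv_mem_adjoin ℚ e₁ h₁)
    set S := Algebra.adjoin ℚ {a, x⁻¹} with hS
    have haS : a ∈ S := Algebra.subset_adjoin (by simp)
    have hxS : x ∈ S := by
      have h : x⁻¹ ∈ S := Algebra.subset_adjoin (by simp)
      simpa using inv_mem_of_finite S h
    set M := (2 * Module.finrank ℚ S).factorial with hM
    have hid : ∀ t : ℕ,
        ((1 + a * (a ^ i)⁻¹ * x * t) * ∑ k ∈ Finset.range r, (-(x * (t : E))) ^ k) ^ M
          - (1 - (-(x * (t : E))) ^ r) ^ M = 0 := by
      intro t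
      obtain ⟨w, e, h⟩ := hw t
      have hb : 1 + x * (t : E) ∈ S := add_mem (one_mem _) (mul_mem hxS (natCast_mem _ t))
      have hwS : w ∈ S := by
        have : w = a * (1 + x * t) * (a⁻¹ * (1 + x * t)⁻¹) := by
          rw [← e, mul_assoc (w * _), mul_inv_cancel_left₀ T.a_ne, mul_assoc,
            mul_inv_cancel₀ (T.one_add_ne t), mul_one]
        rw [this]
        exact mul_mem (mul_mem haS hb)
          (mul_mem (inv_mem_of_finite S haS) (inv_mem_of_finite S hb))
      have ho : orderOf (⟨w, hwS⟩ : S) = orderOf w :=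
        (orderOf_injective (S.val : S →* E) Subtype.val_injective (⟨w, hwS⟩ : S)).symm
      have hdvd := orderOf_dvd_factorial (w := (⟨w, hwS⟩ : S)) (ho ▸ h)
      rw [ho] at hdvd
      exact T.root_of_unity_identity e (orderOf_dvd_iff_pow_eq_one.mp hdvd)
    have hX : ∀ s ∈ (⊤ : Subring (Polynomial E)), ∃ s' ∈ (⊤ : Subring (Polynomial E)),
        Polynomial.X * s = s' * Polynomial.X :=
      fun s _ => ⟨s, trivial, Polynomial.X_mul⟩
    obtain ⟨g, -, e⟩ := exists_first_order _ hX trivial (α := Polynomial.C x)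
      (ζ := Polynomial.C (a * (a ^ i)⁻¹ * x)) trivial trivial T.two_le M
    have hQ : ((M : Polynomial E) * (Polynomial.C (a * (a ^ i)⁻¹ * x) - Polynomial.C x) * Polynomial.X
        + g * Polynomial.X ^ 2 : Polynomial E) = 0 := by
      refine polynomial_eq_zero_of_eval_nat fun t => ?_
      rw [← e]
      let φ : Polynomial E →+* E :=
        Polynomial.eval₂RingHom' (RingHom.id E) (t : E) fun b => Nat.commute_cast b t
      have hφC : ∀ b, φ (Polynomial.C b) = b := fun b => Polynomial.eval₂_C _ _
      have hφX : φ Polynomial.X = t := Polynomial.eval₂_X _ _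
      change φ _ = 0
      rw [← hid t]
      simp only [map_sub, map_pow, map_mul φ, map_add, map_one, map_sum, map_neg, hφX, hφC]
    have h1 := congrArg (fun q : Polynomial E => q.coeff 1) hQ
    have h2 : (M : E) * (a * (a ^ i)⁻¹ * x - x) = 0 := by
      have h3 : (g * Polynomial.X ^ 2).coeff 1 = 0 := by
        rw [Polynomial.coeff_mul_X_pow']; simp
      rw [← Polynomial.C_sub, ← Polynomial.C_eq_natCast, ← Polynomial.C_mul] at h1
      simpa only [Polynomial.coeff_add, h3, add_zero, Polynomial.coeff_C_mul,
        Polynomial.coeff_X_one, mul_one, Polynomial.coeff_zero] using h1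
    rcases mul_eq_zero.mp h2 with h0 | h0
    · exact (Nat.factorial_ne_zero _) (Nat.cast_eq_zero.mp h0)
    · have h4 : a * (a ^ i)⁻¹ = 1 :=
        mul_right_cancel₀ T.x_ne (by rw [one_mul]; exact sub_eq_zero.mp h0)
      exact T.pow_ne ((mul_inv_eq_one₀ (pow_ne_zero i T.a_ne)).mp h4).symm

end TwistedPair

/-! ### Radical normal subgroups -/

/-- A noncentral torsion element is conjugate to a different power of itself. The sums
`f i = ∑ j < m, a ^ (i * j) * d * a ^ (-j)` satisfy `f i * a = a ^ i * f i` and add up to `m * d`.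
As `m ≠ 0` in `D` and `d` does not commute with `a`, some `f i` does not commute with `a`. -/
theorem exists_twist {D : Type*} [DivisionRing D] {a d : D} {m : ℕ} (hm : m = orderOf a)
    (hm0 : 0 < m) (hd : ¬ Commute d a) :
    ∃ (i : ℕ) (x : D), x ≠ 0 ∧ x * a = a ^ i * x ∧ a ^ i ≠ a := by
  have ha : a ^ m = 1 := by rw [hm, pow_orderOf_eq_one]
  have hmD : (m : D) ≠ 0 := by
    subst hm
    exact orderOf_cast_ne_zero hm0
  have ha0 : a ≠ 0 := by
    rintro rfl
    rw [zero_pow hm0.ne'] at ha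
    exact zero_ne_one ha
  let f : ℕ → D := fun i => ∑ j ∈ Finset.range m, (a ^ i) ^ j * d * a⁻¹ ^ j
  have hf : ∀ i, f i * a = a ^ i * f i := by
    intro i
    have h1 : a ^ i * f i * a⁻¹ = f i := by
      have h2 : a ^ i * f i * a⁻¹
          = ∑ j ∈ Finset.range m, (a ^ i) ^ (j + 1) * d * a⁻¹ ^ (j + 1) := by
        simp only [f, Finset.mul_sum, Finset.sum_mul]
        refine Finset.sum_congr rfl fun j _ => ?_
        rw [pow_succ' (a ^ i), pow_succ a⁻¹]
        simp only [mul_assoc]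
      have h3 := (Finset.sum_range_succ (fun j => (a ^ i) ^ j * d * a⁻¹ ^ j) m).symm.trans
        (Finset.sum_range_succ' (fun j => (a ^ i) ^ j * d * a⁻¹ ^ j) m)
      have h4 : (a ^ i) ^ m * d * a⁻¹ ^ m = (a ^ i) ^ 0 * d * a⁻¹ ^ 0 := by
        rw [← pow_mul, mul_comm i, pow_mul, inv_pow, ha]
        simp
      rw [h4] at h3
      rw [h2]
      exact (add_right_cancel h3).symm
    conv_lhs => rw [← h1]
    rw [inv_mul_cancel_right₀ ha0]
  by_contra hcon
  push Not at hcon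
  have hcomm : ∀ i, Commute (f i) a := by
    intro i
    by_cases h0 : f i = 0
    · rw [h0]
      exact Commute.zero_left a
    · have h := hf i
      rw [hcon i _ h0 h] at h
      exact h
  have hsum : ∑ i ∈ Finset.range m, f i = m * d := by
    simp only [f]
    rw [Finset.sum_comm, Finset.sum_eq_single_of_mem 0 (Finset.mem_range.mpr hm0)]
    · simp
    · intro j hj hj0
      have hj1 : a ^ j - 1 ≠ 0 := by
        rw [sub_ne_zero]
        refine pow_ne_one_of_lt_orderOf hj0 ?_
        rw [← hm]
        exact Finset.mem_range.mp hj
      have h : ∑ i ∈ Finset.range m, (a ^ i) ^ j = 0 := by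
        have e := geom_sum_mul (a ^ j) m
        rw [← pow_mul, mul_comm j, pow_mul, ha, one_pow, sub_self] at e
        rw [← (mul_eq_zero.mp e).resolve_right hj1]
        exact Finset.sum_congr rfl fun i _ => by rw [← pow_mul, ← pow_mul, mul_comm]
      rw [← Finset.sum_mul, ← Finset.sum_mul, h, zero_mul, zero_mul]
  apply hd
  have h1 : Commute (∑ i ∈ Finset.range m, f i) a := Commute.sum_left _ _ _ fun i _ => hcomm i
  rw [hsum] at h1
  have h2 := ((Nat.cast_commute m a).inv_left₀).mul_left h1
  rwa [inv_mul_cancel_left₀ hmD] at h2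

/-- If `x` conjugates `a` to `a ^ i`, then `i` is invertible modulo the order of `a`, so the
powers of `x` act on the powers of `a` with finite order. -/
theorem exists_pow_commute {D : Type*} [DivisionRing D] {a x : D} {i : ℕ} (hm : 0 < orderOf a)
    (hx : x ≠ 0) (h : x * a = a ^ i * x) : ∃ r, 2 ≤ r ∧ Commute (x ^ r) a := by
  have hs : SemiconjBy x a (a ^ i) := h
  have hcop : i.Coprime (orderOf a) := by
    set g := i.gcd (orderOf a) with hg
    have hg0 : 0 < g := Nat.gcd_pos_of_pos_right _ hm
    obtain ⟨u, hu⟩ : g ∣ i := Nat.gcd_dvd_left _ _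
    obtain ⟨v, hv⟩ : g ∣ orderOf a := Nat.gcd_dvd_right _ _
    have h1 : (a ^ i) ^ v = 1 := by
      rw [hu, ← pow_mul, mul_right_comm, ← hv, pow_mul, pow_orderOf_eq_one, one_pow]
    have h2 : a ^ v = 1 := by
      have e : x * a ^ v = (a ^ i) ^ v * x := hs.pow_right v
      rw [h1, one_mul] at e
      exact mul_left_cancel₀ hx (e.trans (mul_one x).symm)
    have hv0 : 0 < v := by
      rcases Nat.eq_zero_or_pos v with rfl | h
      · simp [hv] at hm
      · exact h
    have h3 := orderOf_le_of_pow_eq_one hv0 h2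
    have : g ≤ 1 := by
      rw [hv] at h3
      exact Nat.le_of_mul_le_mul_right (by linarith) hv0
    exact le_antisymm this hg0
  have ha : a ^ i ^ (orderOf a).totient = a := by
    conv_rhs => rw [← pow_one a]
    have h := Nat.ModEq.pow_totient hcop
    rw [pow_eq_pow_mod (i ^ _) (pow_orderOf_eq_one a), h, ← pow_eq_pow_mod 1 (pow_orderOf_eq_one a)]
  have hc : Commute (x ^ (orderOf a).totient) a := by
    have e := pow_mul_of_twist h (orderOf a).totient
    rw [ha] at e
    exact e
  refine ⟨(orderOf a).totient * 2, ?_, ?_⟩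
  · have := Nat.totient_pos.mpr hm
    omega
  · rw [pow_mul]
    exact hc.pow_left 2

/-- If `N` is radical over a proper division subring `K`, then each element of `N` has, for each
`d`, a power commuting with `d`. For `d ∉ K`, conjugating a power `z ∈ K` of the given element by
`d` and by `d + 1` gives `u, v ∈ K` with `z - v = (v - u) * d`, so `u = v = z`. -/
theorem exists_pow_commute_of_radical {D : Type*} [DivisionRing D] {K : Subring D}
    (hKdiv : ∀ x ∈ K, x⁻¹ ∈ K) (hKne : ∃ c, c ∉ K) {N : Subgroup Dˣ} [N.Normal]
    (hrad : ∀ a ∈ N, ∃ n : ℕ, 0 < n ∧ ((a : Dˣ) : D) ^ n ∈ K) {y : Dˣ} (hy : y ∈ N) (d : D) :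
    ∃ n, 0 < n ∧ Commute ((y : D) ^ n) d := by
  have main : ∀ d : D, d ∉ K → ∃ n, 0 < n ∧ Commute ((y : D) ^ n) d := by
    intro d hd
    have hd0 : d ≠ 0 := fun h => hd (h ▸ zero_mem K)
    have hd1 : 1 + d ≠ 0 := fun h => hd (by
      rw [eq_neg_of_add_eq_zero_right h]
      exact neg_mem (one_mem K))
    have conj : ∀ g : D, g ≠ 0 → ∃ n, 0 < n ∧ ∃ u, ∀ k, (u ^ n) ^ k ∈ K ∧
        g * y ^ (n * k) = (u ^ n) ^ k * g := by
      intro g hg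
      let q := Units.mk0 g hg
      obtain ⟨n, hn, h⟩ := hrad _ (‹N.Normal›.conj_mem y hy q)
      refine ⟨n, hn, _, fun k => ⟨pow_mem h k, ?_⟩⟩
      have hs : SemiconjBy g (y : D) ((q * y * q⁻¹ : Dˣ) : D) := by
        change g * (y : D) = g * y * g⁻¹ * g
        rw [inv_mul_cancel_right₀ hg]
      rw [← pow_mul]
      exact hs.pow_right _
    obtain ⟨n₀, hn₀, h₀⟩ := hrad y hy
    obtain ⟨n₁, hn₁, u, hu⟩ := conj d hd0
    obtain ⟨n₂, hn₂, v, hv⟩ := conj (1 + d) hd1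
    refine ⟨n₀ * n₁ * n₂, by positivity, ?_⟩
    obtain ⟨huK, eu⟩ := hu (n₀ * n₂)
    obtain ⟨hvK, ev⟩ := hv (n₀ * n₁)
    have hzK : (y : D) ^ (n₀ * n₁ * n₂) ∈ K := by
      rw [mul_assoc, pow_mul]
      exact pow_mem h₀ _
    rw [show n₁ * (n₀ * n₂) = n₀ * n₁ * n₂ by ring] at eu
    rw [show n₂ * (n₀ * n₁) = n₀ * n₁ * n₂ by ring] at ev
    set z := (y : D) ^ (n₀ * n₁ * n₂)
    set u' := (u ^ n₁) ^ (n₀ * n₂)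
    set v' := (v ^ n₂) ^ (n₀ * n₁)
    have e : z - v' = (v' - u') * d := by
      rw [sub_mul, ← eu, sub_eq_sub_iff_add_eq_add]
      rw [add_mul, mul_add, one_mul, mul_one] at ev
      rw [ev, add_comm]
    have huv : v' - u' = 0 := by
      by_contra h0
      refine hd ?_
      rw [← inv_mul_cancel_left₀ h0 d, ← e]
      exact mul_mem (hKdiv _ (sub_mem hvK huK)) (sub_mem hzK hvK)
    rw [huv, zero_mul] at e
    rw [← sub_eq_zero.mp huv, ← sub_eq_zero.mp e] at eu
    exact eu.symm
  by_cases hd : d ∈ K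
  · obtain ⟨c, hc⟩ := hKne
    obtain ⟨n, hn, h⟩ := main c hc
    obtain ⟨k, hk, h'⟩ := main (d + c) fun hdc => hc (by simpa using sub_mem hdc hd)
    refine ⟨n * k, by positivity, ?_⟩
    have h1 : Commute ((y : D) ^ (n * k)) c := by
      rw [pow_mul]
      exact h.pow_left k
    have h2 : Commute ((y : D) ^ (n * k)) (d + c) := by
      rw [mul_comm, pow_mul]
      exact h'.pow_left n
    simpa using h2.sub_right h1
  · exact main d hd

theorem stmt_11 (D : Type*) [DivisionRing D]
    (K : Subalgebra (Subring.center D) D)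
    (hKdiv : ∀ x ∈ K, x⁻¹ ∈ K) (hKne : K ≠ ⊤)
    (N : Subgroup Dˣ) [N.Normal]
    (hrad : ∀ a ∈ N, ∃ n : ℕ, 0 < n ∧ ((a : Dˣ) : D) ^ n ∈ K) :
    ∀ a ∈ N, (∃ m : ℕ, 0 < m ∧ ((a : Dˣ) : D) ^ m = 1) → ((a : Dˣ) : D) ∈ K := by
  rintro a haN ⟨m₀, hm₀, ham₀⟩
  by_contra haK
  have hne : ∃ c, c ∉ K.toSubring := ⟨a, haK⟩
  have hpow : ∀ y ∈ N, ∀ d : D, ∃ n, 0 < n ∧ Commute ((y : D) ^ n) d := fun y hy d =>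
    exists_pow_commute_of_radical (K := K.toSubring) hKdiv hne hrad hy d
  obtain ⟨d, hd⟩ : ∃ d : D, ¬ Commute d a := by
    by_contra! hcon
    exact haK (K.algebraMap_mem ⟨a, Subring.mem_center_iff.mpr fun d => hcon d⟩)
  have hm : 0 < orderOf (a : D) :=
    orderOf_pos_iff.mpr (isOfFinOrder_iff_pow_eq_one.mpr ⟨m₀, hm₀, ham₀⟩)
  obtain ⟨i, x, hx0, hxa, hai⟩ := exists_twist rfl hm hd
  obtain ⟨r, hr, hxr⟩ := exists_pow_commute hm hx0 hxa
  let E : Subfield D := Subfield.closure {(a : D), x}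
  let a' : E := ⟨a, Subfield.subset_closure (by simp)⟩
  let x' : E := ⟨x, Subfield.subset_closure (by simp)⟩
  have T : TwistedPair a' x' i (orderOf (a : D)) r :=
    { twist := Subtype.ext hxa
      x_ne := fun h => hx0 (congrArg Subtype.val h)
      pow_ne := fun h => hai (congrArg Subtype.val h)
      m_pos := hm
      pow_m := Subtype.ext (pow_orderOf_eq_one (a : D))
      two_le := hr
      commute_pow := Subtype.ext hxr
      center := by
        intro z hza hzx
        rw [Subring.mem_center_iff]
        rintro ⟨e, he⟩
        refine Subtype.ext ?_
        change Commute e (z : D)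
        induction he using Subfield.closure_induction with
        | mem s hs =>
          rcases hs with rfl | rfl
          · exact (congrArg Subtype.val hza).symm
          · exact (congrArg Subtype.val hzx).symm
        | one => exact Commute.one_left _
        | add u v _ _ hu hv => exact hu.add_left hv
        | neg u _ hu => exact hu.neg_left
        | inv u _ hu => exact hu.inv_left₀
        | mul u v _ _ hu hv => exact hu.mul_left hv }
  refine T.contradiction fun t w hw => ?_
  -- `w` is the commutator of `a` and `1 + x * t`, hence lies in `N`
  have hb0 : 1 + x * (t : D) ≠ 0 := fun h => T.one_add_ne t (Subtype.ext h)
  let b : Dˣ := Units.mk0 _ hb0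
  have hwN : a * (b * a⁻¹ * b⁻¹) ∈ N :=
    mul_mem haN (‹N.Normal›.conj_mem _ (inv_mem haN) b)
  have hwD : (w : D) * (b * a : Dˣ) = (a * b : Dˣ) := by
    have h : (w : D) * (1 + x * t) * a = a * (1 + x * t) := congrArg Subtype.val hw
    rw [mul_assoc] at h
    exact h
  have hwe : (w : D) = ((a * (b * a⁻¹ * b⁻¹) : Dˣ) : D) := by
    refine (Units.mul_left_inj (b * a)).mp (hwD.trans ?_)
    rw [← Units.val_mul]
    congr 1
    group
  obtain ⟨n, hn, h1⟩ := hpow _ hwN a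
  obtain ⟨k, hk, h2⟩ := hpow _ hwN x
  rw [← hwe] at h1 h2
  refine ⟨n * k, by positivity, Subtype.ext ?_, Subtype.ext ?_⟩
  · change Commute ((w : D) ^ (n * k)) a
    rw [pow_mul]
    exact h1.pow_left k
  · change Commute ((w : D) ^ (n * k)) x
    rw [mul_comm, pow_mul]
    exact h2.pow_left n
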